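/- Let α_1, …, α_r be an orthogonal sequence of long roots in Φ(g/p) with r ≥ 2. Then there exists a root β ∈ Φ(g/p) with ⟨β, α_1⟩ = ⟨β, α_2⟩ = 1. -/

import Mathlib

open scoped RealInnerProductSpace

/-- The Cartan pairing `⟨β, γ⟩ = 2(β,γ)/(γ,γ)`. -/
noncomputable def rpair {V : Type*} [NormedAddCommGroup V] [InnerProductSpace ℝ V]
    (β γ : V) : ℝ := 2 * ⟪β, γ⟫ / ⟪γ, γ⟫

/-- An irreducible reduced crystallographic root system in a real inner product space,
equipped with a base `Δ` of simple roots, the coefficient function `m` (so that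
`β = ∑_{δ ∈ Δ} m β δ • δ` for roots `β`) and the highest root `θ`. -/
structure IrredRootSystem (V : Type*) [NormedAddCommGroup V] [InnerProductSpace ℝ V] where
  Φ : Set V
  Δ : Finset V
  m : V → V → ℤ
  θ : V
  finite : Φ.Finite
  zero_notMem : (0 : V) ∉ Φ
  spans : Submodule.span ℝ Φ = ⊤
  neg_mem : ∀ β ∈ Φ, -β ∈ Φ
  reflect_mem : ∀ β ∈ Φ, ∀ γ ∈ Φ, β - rpair β γ • γ ∈ Φ
  crystallographic : ∀ β ∈ Φ, ∀ γ ∈ Φ, ∃ z : ℤ, rpair β γ = z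
  reduced : ∀ β ∈ Φ, ∀ t : ℝ, t • β ∈ Φ → t = 1 ∨ t = -1
  irreducible : ¬ ∃ A B : Set V, A.Nonempty ∧ B.Nonempty ∧ Disjoint A B ∧ A ∪ B = Φ ∧
      ∀ β ∈ A, ∀ γ ∈ B, ⟪β, γ⟫ = 0
  base_subset : ↑Δ ⊆ Φ
  base_indep : LinearIndependent ℝ (fun δ : Δ => (δ : V))
  base_repr : ∀ β ∈ Φ, β = ∑ δ ∈ Δ, (m β δ : ℝ) • δ
  base_sign : ∀ β ∈ Φ, (∀ δ ∈ Δ, 0 ≤ m β δ) ∨ (∀ δ ∈ Δ, m β δ ≤ 0)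
  theta_mem : θ ∈ Φ
  theta_highest : ∀ β ∈ Φ, ∀ δ ∈ Δ, m β δ ≤ m θ δ

namespace IrredRootSystem

variable {V : Type*} [NormedAddCommGroup V] [InnerProductSpace ℝ V]

/-- The positive roots `Φ⁺`. -/
def Pos (D : IrredRootSystem V) : Set V := {β | β ∈ D.Φ ∧ ∀ δ ∈ D.Δ, 0 ≤ D.m β δ}

/-- The negative roots `Φ⁻`. -/
def Neg (D : IrredRootSystem V) : Set V := {β | β ∈ D.Φ ∧ ∀ δ ∈ D.Δ, D.m β δ ≤ 0}

/-- A long root: a root of maximal squared length. -/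
def IsLong (D : IrredRootSystem V) (β : V) : Prop :=
  β ∈ D.Φ ∧ ∀ γ ∈ D.Φ, ⟪γ, γ⟫ ≤ ⟪β, β⟫

/-- `Φ(g/p)`: the roots whose coefficient on the cominuscule simple root `α` is `1`. -/
def gp (D : IrredRootSystem V) (α : V) : Set V := {β | β ∈ D.Φ ∧ D.m β α = 1}

/-- An orthogonal sequence of long roots in `Φ(g/p)`. -/
def IsOrthLongSeq (D : IrredRootSystem V) (α : V) {r : ℕ} (a : Fin r → V) : Prop :=
  (∀ i, D.IsLong (a i)) ∧ (∀ i, a i ∈ D.gp α) ∧ ∀ i j, i ≠ j → ⟪a i, a j⟫ = 0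

end IrredRootSystem

/-!
Since `Φ` is irreducible, two roots are always joined by a root orthogonal to neither. A root
joining orthogonal long roots `p` and `q` is neither `±p` nor `±q`, so maximality of their
length makes its pairings with `p` and `q` equal to `±1`, and reflecting in `p` and in `q` makes
both equal to `1`. For the resulting root `β`, the reflection in `p` followed by that in `q`
sends `β` to `β - p - q`, so `β` and `p + q - β` are roots. Their coefficients at `α` are at
most `1` and add up to `2`, hence both equal `1`.
-/

section rpair

variable {V : Type*} [NormedAddCommGroup V] [InnerProductSpace ℝ V] {β γ : V}

lemma rpair_neg_left (β γ : V) : rpair (-β) γ = -rpair β γ := by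
  simp only [rpair, inner_neg_left, mul_neg, neg_div]

lemma rpair_self (hγ : γ ≠ 0) : rpair γ γ = 2 :=
  mul_div_cancel_right₀ 2 (real_inner_self_pos.2 hγ).ne'

lemma rpair_sub_smul_left (β γ η : V) (t : ℝ) :
    rpair (β - t • γ) η = rpair β η - t * rpair γ η := by
  simp only [rpair, inner_sub_left, real_inner_smul_left]
  ring

lemma rpair_eq_zero_iff : rpair β γ = 0 ↔ ⟪β, γ⟫ = 0 := by
  constructor
  · intro h
    rcases eq_or_ne γ 0 with rfl | hγ
    · exact inner_zero_right β
    · simpa [rpair, hγ] using h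
  · intro h
    rw [rpair, h, mul_zero, zero_div]

lemma rpair_reflect_self (hγ : γ ≠ 0) : rpair (β - rpair β γ • γ) γ = -rpair β γ := by
  rw [rpair_sub_smul_left, rpair_self hγ]
  ring

lemma rpair_sub_smul_left_of_inner_eq_zero (t : ℝ) {η : V} (h : ⟪γ, η⟫ = 0) :
    rpair (β - t • γ) η = rpair β η := by
  rw [rpair_sub_smul_left, rpair_eq_zero_iff.2 h, mul_zero, sub_zero]

lemma rpair_lt_two (hle : ⟪β, β⟫ ≤ ⟪γ, γ⟫) (hne : β ≠ γ) : rpair β γ < 2 := by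
  have hsub : 0 < ⟪β - γ, β - γ⟫ := real_inner_self_pos.2 (sub_ne_zero.2 hne)
  rw [real_inner_sub_sub_self] at hsub
  have hγ : γ ≠ 0 := by
    rintro rfl
    exact hne (real_inner_self_nonpos.1 (hle.trans_eq (inner_zero_left 0)))
  rw [rpair, div_lt_iff₀ (real_inner_self_pos.2 hγ)]
  linarith

lemma abs_rpair_lt_two (hle : ⟪β, β⟫ ≤ ⟪γ, γ⟫) (hne : β ≠ γ) (hneg : β ≠ -γ) :
    |rpair β γ| < 2 := by
  refine max_lt (rpair_lt_two hle hne) ?_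
  rw [← rpair_neg_left]
  exact rpair_lt_two (by rwa [inner_neg_neg]) (mt neg_eq_iff_eq_neg.1 hneg)

end rpair

namespace IrredRootSystem

variable {V : Type*} [NormedAddCommGroup V] [InnerProductSpace ℝ V] (D : IrredRootSystem V)
  {α β γ p q : V}

lemma ne_zero (hβ : β ∈ D.Φ) : β ≠ 0 :=
  ne_of_mem_of_not_mem hβ D.zero_notMem

lemma induction_of_inner_ne_zero {P : V → Prop} (hβ : β ∈ D.Φ) (base : P β)
    (step : ∀ γ ∈ D.Φ, ∀ η ∈ D.Φ, ⟪γ, η⟫ ≠ 0 → P γ → P η) (hγ : γ ∈ D.Φ) : P γ := by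
  by_contra hPγ
  refine D.irreducible ⟨{η ∈ D.Φ | P η}, {η ∈ D.Φ | ¬ P η}, ⟨β, hβ, base⟩, ⟨γ, hγ, hPγ⟩,
    ?_, ?_, ?_⟩
  · exact Set.disjoint_left.2 fun η hη hη' => hη'.2 hη.2
  · exact Set.inter_union_compl D.Φ {η | P η}
  · rintro γ ⟨hγ, hP⟩ η ⟨hη, hnP⟩
    by_contra hγη
    exact hnP (step γ hγ η hη hγη hP)

lemma exists_mem_inner_ne_zero (hβ : β ∈ D.Φ) (hγ : γ ∈ D.Φ) :
    ∃ δ ∈ D.Φ, ⟪δ, β⟫ ≠ 0 ∧ ⟪δ, γ⟫ ≠ 0 := by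
  have hββ : ⟪β, β⟫ ≠ 0 := inner_self_ne_zero.2 (D.ne_zero hβ)
  refine D.induction_of_inner_ne_zero (P := fun γ => ∃ δ ∈ D.Φ, ⟪δ, β⟫ ≠ 0 ∧ ⟪δ, γ⟫ ≠ 0) hβ
    ⟨β, hβ, hββ, hββ⟩ ?_ hγ
  rintro γ hγ η - hγη ⟨δ, hδ, hδβ, hδγ⟩
  by_cases hδη : ⟪δ, η⟫ = 0
  · by_cases hγβ : ⟪γ, β⟫ = 0
    -- In the chain `β, δ, γ, η` the reflection of `δ` in `γ` replaces both `δ` and `γ`.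
    · refine ⟨δ - rpair δ γ • γ, D.reflect_mem δ hδ γ hγ, ?_, ?_⟩
      · rwa [inner_sub_left, real_inner_smul_left, hγβ, mul_zero, sub_zero]
      · rw [inner_sub_left, real_inner_smul_left, hδη, zero_sub, neg_ne_zero]
        exact mul_ne_zero (mt rpair_eq_zero_iff.1 hδγ) hγη
    · exact ⟨γ, hγ, hγβ, hγη⟩
  · exact ⟨δ, hδ, hδβ, hδη⟩

variable {D} in
lemma IsLong.abs_rpair_eq_one (hp : D.IsLong p) (hβ : β ∈ D.Φ) (hne : β ≠ p) (hneg : β ≠ -p)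
    (hinner : ⟪β, p⟫ ≠ 0) : |rpair β p| = 1 := by
  obtain ⟨z, hz⟩ := D.crystallographic β hβ p hp.1
  have hpos : 0 < |rpair β p| := abs_pos.2 (mt rpair_eq_zero_iff.1 hinner)
  have hlt : |rpair β p| < 2 := abs_rpair_lt_two (hp.2 β hβ) hne hneg
  rw [hz] at hpos hlt ⊢
  norm_cast at hpos hlt ⊢
  omega

lemma exists_rpair_eq_abs (hβ : β ∈ D.Φ) (hγ : γ ∈ D.Φ) :
    ∃ δ ∈ D.Φ, rpair δ γ = |rpair β γ| ∧ ∀ η, ⟪γ, η⟫ = 0 → rpair δ η = rpair β η := by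
  rcases abs_choice (rpair β γ) with h | h
  · exact ⟨β, hβ, h.symm, fun _ _ => rfl⟩
  · exact ⟨β - rpair β γ • γ, D.reflect_mem β hβ γ hγ,
      (rpair_reflect_self (D.ne_zero hγ)).trans h.symm,
      fun _ => rpair_sub_smul_left_of_inner_eq_zero _⟩

variable {D} in
lemma IsLong.exists_rpair_eq_one (hp : D.IsLong p) (hq : D.IsLong q) (hpq : ⟪p, q⟫ = 0) :
    ∃ β ∈ D.Φ, rpair β p = 1 ∧ rpair β q = 1 := by
  have hqp : ⟪q, p⟫ = 0 := inner_eq_zero_symm.1 hpq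
  obtain ⟨γ, hγ, hγp, hγq⟩ := D.exists_mem_inner_ne_zero hp.1 hq.1
  have habs_p : |rpair γ p| = 1 := by
    refine hp.abs_rpair_eq_one hγ ?_ ?_ hγp <;> rintro rfl <;> simp [hpq] at hγq
  have habs_q : |rpair γ q| = 1 := by
    refine hq.abs_rpair_eq_one hγ ?_ ?_ hγq <;> rintro rfl <;> simp [hqp] at hγp
  obtain ⟨δ, hδ, hδp, hδ_orth⟩ := D.exists_rpair_eq_abs hγ hp.1
  obtain ⟨β, hβ, hβq, hβ_orth⟩ := D.exists_rpair_eq_abs hδ hq.1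
  exact ⟨β, hβ, by rw [hβ_orth p hqp, hδp, habs_p], by rw [hβq, hδ_orth q hpq, habs_q]⟩

lemma add_sub_mem_of_rpair_eq_one (hβ : β ∈ D.Φ) (hp : p ∈ D.Φ) (hq : q ∈ D.Φ)
    (hpq : ⟪p, q⟫ = 0) (hβp : rpair β p = 1) (hβq : rpair β q = 1) : p + q - β ∈ D.Φ := by
  have hsub : β - p ∈ D.Φ := by simpa only [hβp, one_smul] using D.reflect_mem β hβ p hp
  have hpair : rpair (β - p) q = 1 := by
    simpa only [one_smul, hβq] using rpair_sub_smul_left_of_inner_eq_zero (β := β) 1 hpq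
  have hsub₂ : β - p - q ∈ D.Φ := by
    simpa only [hpair, one_smul] using D.reflect_mem (β - p) hsub q hq
  simpa only [neg_sub, sub_sub] using D.neg_mem _ hsub₂

/-- The simple roots as a basis of the ambient space, so that `m · δ` is the restriction to roots
of a linear coordinate. -/
noncomputable def simpleBasis : Module.Basis D.Δ ℝ V :=
  Module.Basis.mk D.base_indep <| by
    rw [← D.spans, Submodule.span_le]
    intro β hβ
    rw [D.base_repr β hβ]
    exact Submodule.sum_smul_mem _ _ fun δ hδ => Submodule.subset_span ⟨⟨δ, hδ⟩, rfl⟩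

lemma simpleBasis_coord (hβ : β ∈ D.Φ) (δ : D.Δ) : D.simpleBasis.coord δ β = D.m β δ := by
  have hrepr : β = ∑ ε : D.Δ, (D.m β ε : ℝ) • D.simpleBasis ε := by
    simpa only [simpleBasis, Module.Basis.mk_apply, Finset.univ_eq_attach,
      Finset.sum_attach D.Δ fun ε => (D.m β ε : ℝ) • ε] using D.base_repr β hβ
  conv_lhs => rw [hrepr]
  rw [Module.Basis.coord_apply, Module.Basis.repr_sum_self]

lemma m_add_sub (hα : α ∈ D.Δ) (hβ : β ∈ D.Φ) (hp : p ∈ D.Φ) (hq : q ∈ D.Φ)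
    (h : p + q - β ∈ D.Φ) : D.m (p + q - β) α = D.m p α + D.m q α - D.m β α := by
  have hcoord := map_sub (D.simpleBasis.coord ⟨α, hα⟩) (p + q) β
  rw [map_add, D.simpleBasis_coord h, D.simpleBasis_coord hp, D.simpleBasis_coord hq,
    D.simpleBasis_coord hβ] at hcoord
  exact_mod_cast hcoord

lemma mem_gp_of_add_sub_mem (hα : α ∈ D.Δ) (hcom : D.m D.θ α = 1) (hβ : β ∈ D.Φ)
    (hp : p ∈ D.gp α) (hq : q ∈ D.gp α) (h : p + q - β ∈ D.Φ) : β ∈ D.gp α := by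
  have hsum := D.m_add_sub hα hβ hp.1 hq.1 h
  rw [hp.2, hq.2] at hsum
  have hβ_le := D.theta_highest β hβ α hα
  have hcompl_le := D.theta_highest _ h α hα
  exact ⟨hβ, by omega⟩

end IrredRootSystem

/-- For an orthogonal sequence of long roots in `Φ(g/p)` of length `r ≥ 2`,
there is a root `β ∈ Φ(g/p)` with `⟨β, α_1⟩ = ⟨β, α_2⟩ = 1`. -/
theorem exists_common_pairing_one {V : Type*} [NormedAddCommGroup V]
    [InnerProductSpace ℝ V] (D : IrredRootSystem V)
    (α : V) (hα : α ∈ D.Δ) (hcom : D.m D.θ α = 1)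
    {r : ℕ} (hr : 2 ≤ r) (a : Fin r → V) (ha : D.IsOrthLongSeq α a) :
    ∃ β ∈ D.gp α, rpair β (a ⟨0, by omega⟩) = 1 ∧ rpair β (a ⟨1, by omega⟩) = 1 := by
  obtain ⟨hlong, hgp, horth⟩ := ha
  have h01 := horth ⟨0, by omega⟩ ⟨1, by omega⟩ (by simp)
  obtain ⟨β, hβ, hβ0, hβ1⟩ := (hlong ⟨0, by omega⟩).exists_rpair_eq_one (hlong ⟨1, by omega⟩) h01
  have hcompl := D.add_sub_mem_of_rpair_eq_one hβ (hgp _).1 (hgp _).1 h01 hβ0 hβ1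
  exact ⟨β, D.mem_gp_of_add_sub_mem hα hcom hβ (hgp _) (hgp _) hcompl, hβ0, hβ1⟩
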